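/- arXiv:1110.4658 — 3 statements merged into one kernel-verified Lean document; each statement's English description precedes it below -/
import Mathlib

section
/- Let T > 0 and let constants 0 < c₂ < c₃ (so that c₃⁻¹ < c₂⁻¹), C₁ > 0, C₀ ≥ 0, L > 0 be given. Let h̲ ≤ h̄ be real numbers with c₂⁻¹ ≤ h̲ and h̄ finite, and set C₂ := e^{C₁T}·h̄ + ((C₀+1)/C₁)(e^{C₁T} − 1). Let F̲, F̄ : [0,T] × ℝ → ℝ satisfy F̲ ≤ F̄ pointwise, with t ↦ F̄(t,y) and t ↦ F̲(t,y) Lebesgue measurable for each y, both F̄(t,·) and F̲(t,·) L-Lipschitz on [c₃⁻¹, C₂] for every t, and sup over t ∈ [0,T] and y ∈ [c₃⁻¹, C₂] of |F̄(t,y)| + |F̲(t,y)| finite. Suppose ε > 0 satisfies: F̄(t,y) ≤ C₀ + C₁y + εy² for all t and all y ∈ [c₃⁻¹, C₂]; F̲(t, c₃⁻¹) ≥ −ε for all t; εC₂² ≤ 1; and ε(e^{LT} − 1)/L ≤ c₂⁻¹ − c₃⁻¹. Then the two dominating backward ODEs ȳ(t) = h̄ + ∫_t^T F̄(s, ȳ(s))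 ds and y̲(t) = h̲ + ∫_t^T F̲(s, y̲(s)) ds admit continuous solutions ȳ, y̲ on [0,T] with c₃⁻¹ ≤ y̲(t) ≤ ȳ(t) ≤ C₂ for all t ∈ [0,T]. -/
open MeasureTheory Set

/-!
Clamp the space variable of both generators to `[c₃⁻¹, C₂]`. The clamped generators are globally
Lipschitz in space, so Picard iteration solves both backward equations even though time dependence
is merely measurable. A comparison principle, obtained by applying Grönwall's inequality to the
positive part of the difference of two solutions, orders the two solutions and traps them between
explicit barriers: from above the solution of the affine equation with generator `C₁ y + C₀ + 1`,
whose value at time `0` is `C₂`; from below `c₃⁻¹ + ε (e^{L t} - 1) / L`, whose value at time `T` is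
at most `c₂⁻¹` by the smallness of `ε`. Hence the clamping is never active.
-/

open scoped NNReal

section Integral

variable {E : Type*} [NormedAddCommGroup E] {f : ℝ → E} {a b t r : ℝ}

theorem intervalIntegrable_of_mem_Icc (hf : IntervalIntegrable f volume a b) (ht : t ∈ Icc a b)
    (hr : r ∈ Icc a b) : IntervalIntegrable f volume t r :=
  hf.mono_set (uIcc_subset_uIcc (Icc_subset_uIcc ht) (Icc_subset_uIcc hr))

theorem continuousOn_integral_left [NormedSpace ℝ E] (hf : IntervalIntegrable f volume a b) :
    ContinuousOn (fun t ↦ ∫ s in t..b, f s) (Icc a b) := by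
  simp only [intervalIntegral.integral_symm b]
  exact ((intervalIntegral.continuousOn_primitive_interval' hf right_mem_uIcc).mono
    Icc_subset_uIcc).neg

theorem continuousOn_of_eq_add_integral_left [NormedSpace ℝ E] {y : ℝ → E} {ξ : E}
    (hf : IntervalIntegrable f volume a b) (hy : ∀ t ∈ Icc a b, y t = ξ + ∫ s in t..b, f s) :
    ContinuousOn y (Icc a b) :=
  (continuousOn_const.add (continuousOn_integral_left hf)).congr hy

end Integral

section Gronwall

variable {u w f : ℝ → ℝ} {a b K : ℝ}

theorem monotoneOn_exp_mul_integral_left (hu : ContinuousOn u (Icc a b))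
    (h : ∀ t ∈ Icc a b, u t ≤ K * ∫ s in t..b, u s) :
    MonotoneOn (fun t ↦ Real.exp (K * t) * ∫ s in t..b, u s) (Icc a b) := by
  rcases lt_or_ge b a with hba | hab
  · simp [Icc_eq_empty_of_lt hba, MonotoneOn]
  have hint : IntervalIntegrable u volume a b := hu.intervalIntegrable_of_Icc hab
  have hderiv (s : ℝ) (hs : s ∈ Ioo a b) : HasDerivAt (fun t ↦ ∫ r in t..b, u r) (-u s) s :=
    intervalIntegral.integral_hasDerivAt_left
      (intervalIntegrable_of_mem_Icc hint (Ioo_subset_Icc_self hs) (right_mem_Icc.2 hab))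
      ((hu.mono Ioo_subset_Icc_self).stronglyMeasurableAtFilter isOpen_Ioo s hs)
      (hu.continuousAt (Icc_mem_nhds hs.1 hs.2))
  have hexp (s : ℝ) : HasDerivAt (fun t ↦ Real.exp (K * t)) (Real.exp (K * s) * K) s := by
    simpa using ((hasDerivAt_id s).const_mul K).exp
  refine monotoneOn_of_hasDerivWithinAt_nonneg (convex_Icc a b)
    (f' := fun s ↦ Real.exp (K * s) * ((K * ∫ r in s..b, u r) - u s))
    (ContinuousOn.mul (by fun_prop) (continuousOn_integral_left hint))
    (fun s hs ↦ ?_) (fun s hs ↦ ?_)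
  · rw [interior_Icc] at hs
    exact (((hexp s).mul (hderiv s hs)).congr_deriv (by ring)).hasDerivWithinAt
  · exact mul_nonneg (Real.exp_pos _).le (sub_nonneg.2 (h s (interior_subset hs)))

theorem nonpos_of_le_mul_integral_left (hK : 0 ≤ K) (hu : ContinuousOn u (Icc a b))
    (h : ∀ t ∈ Icc a b, u t ≤ K * ∫ s in t..b, u s) {t : ℝ} (ht : t ∈ Icc a b) : u t ≤ 0 := by
  have hintegral : ∫ s in t..b, u s ≤ 0 := by
    have hle := monotoneOn_exp_mul_integral_left hu h ht (right_mem_Icc.2 (ht.1.trans ht.2)) ht.2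
    simp only [intervalIntegral.integral_same, mul_zero] at hle
    exact nonpos_of_mul_nonpos_right hle (Real.exp_pos _)
  exact (h t ht).trans (mul_nonpos_of_nonneg_of_nonpos hK hintegral)

theorem exists_first_nonpos (hab : a ≤ b) (hw : ContinuousOn w (Icc a b))
    (hwb : w b ≤ 0) : ∃ r ∈ Icc a b, w r ≤ 0 ∧ ∀ s ∈ Ico a r, 0 < w s := by
  have hclosed : IsClosed (Icc a b ∩ w ⁻¹' Iic 0) :=
    hw.preimage_isClosed_of_isClosed isClosed_Icc isClosed_Iic
  obtain ⟨r, ⟨hr, hwr⟩, hleast⟩ := (isCompact_Icc.of_isClosed_subset hclosed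
    inter_subset_left).exists_isLeast ⟨b, right_mem_Icc.2 hab, hwb⟩
  refine ⟨r, hr, hwr, fun s hs ↦ lt_of_not_ge fun hws ↦ hs.2.not_ge ?_⟩
  exact hleast ⟨⟨hs.1, hs.2.le.trans hr.2⟩, hws⟩

theorem posPart_le_mul_integral_posPart (hK : 0 ≤ K) (hf : IntervalIntegrable f volume a b)
    (hwb : w b ≤ 0) (hw : ∀ t ∈ Icc a b, w t = w b + ∫ s in t..b, f s)
    (hfw : ∀ s ∈ Icc a b, 0 < w s → f s ≤ K * w s) {t : ℝ} (ht : t ∈ Icc a b) :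
    (w t)⁺ ≤ K * ∫ s in t..b, (w s)⁺ := by
  have hb : b ∈ Icc a b := right_mem_Icc.2 (ht.1.trans ht.2)
  have hwcont : ContinuousOn w (Icc a b) := continuousOn_of_eq_add_integral_left hf hw
  have hposint : IntervalIntegrable (fun s ↦ (w s)⁺) volume a b :=
    (hwcont.sup continuousOn_const).intervalIntegrable_of_Icc hb.1
  obtain ⟨r, hr, hwr, hpos⟩ :=
    exists_first_nonpos ht.2 (hwcont.mono (Icc_subset_Icc_left ht.1)) hwb
  have hr' : r ∈ Icc a b := ⟨ht.1.trans hr.1, hr.2⟩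
  have hwt : w t = w r + ∫ s in t..r, f s := by
    rw [hw t ht, hw r hr', add_right_comm, add_assoc,
      intervalIntegral.integral_add_adjacent_intervals
        (intervalIntegrable_of_mem_Icc hf ht hr') (intervalIntegrable_of_mem_Icc hf hr' hb)]
  have hle : ∫ s in t..r, f s ≤ ∫ s in t..r, K * (w s)⁺ := by
    refine intervalIntegral.integral_mono_on_of_le_Ioo hr.1
      (intervalIntegrable_of_mem_Icc hf ht hr')
      ((intervalIntegrable_of_mem_Icc hposint ht hr').const_mul K) fun s hs ↦ ?_
    rw [posPart_of_nonneg (hpos s ⟨hs.1.le, hs.2⟩).le]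
    exact hfw s ⟨ht.1.trans hs.1.le, hs.2.le.trans hr.2⟩ (hpos s ⟨hs.1.le, hs.2⟩)
  have hextend : ∫ s in t..r, (w s)⁺ ≤ ∫ s in t..b, (w s)⁺ :=
    intervalIntegral.integral_mono_interval le_rfl hr.1 hr.2
      (Filter.Eventually.of_forall fun s ↦ posPart_nonneg (w s))
      (intervalIntegrable_of_mem_Icc hposint ht hb)
  refine sup_le ?_ ?_
  · calc w t ≤ ∫ s in t..r, K * (w s)⁺ := by linarith
      _ = K * ∫ s in t..r, (w s)⁺ := intervalIntegral.integral_const_mul K _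
      _ ≤ K * ∫ s in t..b, (w s)⁺ := by gcongr
  · exact mul_nonneg hK (intervalIntegral.integral_nonneg ht.2 fun s _ ↦ posPart_nonneg (w s))

theorem nonpos_of_eq_add_integral_left (hK : 0 ≤ K) (hf : IntervalIntegrable f volume a b)
    (hwb : w b ≤ 0) (hw : ∀ t ∈ Icc a b, w t = w b + ∫ s in t..b, f s)
    (hfw : ∀ s ∈ Icc a b, 0 < w s → f s ≤ K * w s) {t : ℝ} (ht : t ∈ Icc a b) : w t ≤ 0 := by
  have hwcont : ContinuousOn w (Icc a b) := continuousOn_of_eq_add_integral_left hf hw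
  exact posPart_eq_zero.1 <| (posPart_nonneg _).antisymm' <|
    nonpos_of_le_mul_integral_left hK (hwcont.sup continuousOn_const)
      (fun s hs ↦ posPart_le_mul_integral_posPart hK hf hwb hw hfw hs) ht

end Gronwall

section Generator

variable {E : Type*} [NormedAddCommGroup E] {F : ℝ → E → E} {K : ℝ≥0} {a b : ℝ}
  {S : Set E}

/-- Carathéodory regularity of the generator `F` on `[a, b] × S`: measurable and integrable in time,
and `K`-Lipschitz in space uniformly in time. -/
structure IsCaratheodoryOn (F : ℝ → E → E) (K : ℝ≥0) (a b : ℝ) (S : Set E) : Prop where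
  stronglyMeasurable : ∀ x ∈ S, StronglyMeasurable fun t ↦ F t x
  intervalIntegrable : ∀ x ∈ S, IntervalIntegrable (fun t ↦ F t x) volume a b
  lipschitzOnWith : ∀ t ∈ Icc a b, LipschitzOnWith K (F t) S

namespace IsCaratheodoryOn

theorem aestronglyMeasurable_comp (hF : IsCaratheodoryOn F K a b S) {v : ℝ → E}
    (hv : ContinuousOn v (Icc a b)) (hvS : MapsTo v (Icc a b) S) :
    AEStronglyMeasurable (fun s ↦ F s (v s)) (volume.restrict (Icc a b)) := by
  -- Freezing the argument of `v` as a separate time variable avoids separability of `E`.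
  have huncurry : StronglyMeasurable (Function.uncurry fun r s : Icc a b ↦ F s (v r)) :=
    stronglyMeasurable_uncurry_of_continuous_of_stronglyMeasurable
      (fun s ↦ (hF.lipschitzOnWith s s.2).continuousOn.comp_continuous hv.domRestrict
        fun r ↦ hvS r.2)
      (fun r ↦ (hF.stronglyMeasurable _ (hvS r.2)).comp_measurable measurable_subtype_coe)
  rw [← map_comap_subtype_coe measurableSet_Icc,
    (MeasurableEmbedding.subtype_coe measurableSet_Icc).aestronglyMeasurable_map_iff]
  exact (huncurry.comp_measurable (measurable_id.prodMk measurable_id)).aestronglyMeasurable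

theorem intervalIntegrable_comp (hF : IsCaratheodoryOn F K a b S) (hab : a ≤ b) {v : ℝ → E}
    (hv : ContinuousOn v (Icc a b)) (hvS : MapsTo v (Icc a b) S) :
    IntervalIntegrable (fun s ↦ F s (v s)) volume a b := by
  have ha : a ∈ Icc a b := left_mem_Icc.2 hab
  have hdom : IntervalIntegrable (fun s ↦ ‖F s (v a)‖ + K * ‖v s - v a‖) volume a b :=
    (hF.intervalIntegrable _ (hvS ha)).norm.add <| ContinuousOn.intervalIntegrable_of_Icc hab <|
      continuousOn_const.mul (hv.sub continuousOn_const).norm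
  have hIoc : uIoc a b ⊆ Icc a b := (uIoc_of_le hab).trans_subset Ioc_subset_Icc_self
  refine hdom.mono_fun' ((hF.aestronglyMeasurable_comp hv hvS).mono_set hIoc) ?_
  refine (ae_restrict_mem measurableSet_uIoc).mono fun s hs ↦ ?_
  calc ‖F s (v s)‖ ≤ ‖F s (v a)‖ + ‖F s (v s) - F s (v a)‖ := norm_le_norm_add_norm_sub' _ _
    _ ≤ ‖F s (v a)‖ + K * ‖v s - v a‖ := by
      gcongr
      exact (hF.lipschitzOnWith s (hIoc hs)).norm_sub_le (hvS (hIoc hs)) (hvS ha)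

theorem intervalIntegrable_IccExtend (hF : IsCaratheodoryOn F K a b univ)
    (hab : a ≤ b) (u : C(Icc a b, E)) :
    IntervalIntegrable (fun s ↦ F s (IccExtend hab u s)) volume a b :=
  hF.intervalIntegrable_comp hab u.continuous.Icc_extend'.continuousOn (mapsTo_univ _ _)

theorem of_norm_le {C : ℝ} (hab : a ≤ b) (hmeas : ∀ x ∈ S, StronglyMeasurable fun t ↦ F t x)
    (hbound : ∀ t ∈ Icc a b, ∀ x ∈ S, ‖F t x‖ ≤ C)
    (hLip : ∀ t ∈ Icc a b, LipschitzOnWith K (F t) S) : IsCaratheodoryOn F K a b S where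
  stronglyMeasurable := hmeas
  intervalIntegrable x hx := by
    refine (intervalIntegrable_const (c := C)).mono_fun' (hmeas x hx).aestronglyMeasurable <|
      (ae_restrict_mem measurableSet_uIoc).mono fun s hs ↦ hbound s ?_ x hx
    exact Ioc_subset_Icc_self (uIoc_of_le hab ▸ hs)
  lipschitzOnWith := hLip

end IsCaratheodoryOn

/-- `y` solves the backward equation `y t = ξ + ∫ s in t..b, F s (y s)` on `[a, b]`. Integrability
is part of the notion, so that the integral is never a junk value. -/
structure IsBackwardSolution [NormedSpace ℝ E] (F : ℝ → E → E) (a b : ℝ) (ξ : E) (y : ℝ → E) :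
    Prop where
  intervalIntegrable : IntervalIntegrable (fun s ↦ F s (y s)) volume a b
  eq_add_integral : ∀ t ∈ Icc a b, y t = ξ + ∫ s in t..b, F s (y s)

namespace IsBackwardSolution

variable [NormedSpace ℝ E] {ξ : E} {y : ℝ → E}

theorem continuousOn (hy : IsBackwardSolution F a b ξ y) : ContinuousOn y (Icc a b) :=
  continuousOn_of_eq_add_integral_left hy.intervalIntegrable hy.eq_add_integral

theorem congr {G : ℝ → E → E} (hy : IsBackwardSolution F a b ξ y) (hab : a ≤ b)
    (hFG : ∀ s ∈ Icc a b, F s (y s) = G s (y s)) : IsBackwardSolution G a b ξ y where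
  intervalIntegrable := hy.intervalIntegrable.congr fun s hs ↦
    hFG s (Ioc_subset_Icc_self (uIoc_of_le hab ▸ hs))
  eq_add_integral t ht := by
    rw [hy.eq_add_integral t ht, intervalIntegral.integral_congr fun s hs ↦ hFG s ?_]
    rw [uIcc_of_le ht.2] at hs
    exact ⟨ht.1.trans hs.1, hs.2⟩

theorem of_hasDerivAt [CompleteSpace E] (hab : a ≤ b)
    (hcont : ContinuousOn (fun s ↦ F s (y s)) (Icc a b))
    (hderiv : ∀ s ∈ Icc a b, HasDerivAt y (-F s (y s)) s) : IsBackwardSolution F a b (y b) y where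
  intervalIntegrable := hcont.intervalIntegrable_of_Icc hab
  eq_add_integral t ht := by
    have hsub : uIcc t b ⊆ Icc a b := uIcc_of_le ht.2 ▸ Icc_subset_Icc_left ht.1
    have hftc := intervalIntegral.integral_eq_sub_of_hasDerivAt
      (fun s hs ↦ hderiv s (hsub hs)) (hcont.neg.mono hsub).intervalIntegrable
    rw [intervalIntegral.integral_neg] at hftc
    rw [← neg_neg (∫ s in t..b, F s (y s)), hftc]
    abel

end IsBackwardSolution

section Existence

variable [NormedSpace ℝ E]

/-- The Picard operator `u ↦ (t ↦ ξ + ∫ s in t..b, F s (u s))`, whose fixed points are the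
solutions of the backward equation. -/
noncomputable def backwardPicard (hF : IsCaratheodoryOn F K a b univ) (hab : a ≤ b) (ξ : E)
    (u : C(Icc a b, E)) : C(Icc a b, E) where
  toFun t := ξ + ∫ s in t..b, F s (IccExtend hab u s)
  continuous_toFun := continuous_const.add
    (continuousOn_integral_left (hF.intervalIntegrable_IccExtend hab u)).domRestrict

variable (hF : IsCaratheodoryOn F K a b univ) (hab : a ≤ b) (ξ : E)

theorem dist_backwardPicard_apply_le_integral (u v : C(Icc a b, E)) {B : ℝ → ℝ} (hB : Continuous B)
    (huv : ∀ s : Icc a b, dist (u s) (v s) ≤ B s) (t : Icc a b) :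
    dist (backwardPicard hF hab ξ u t) (backwardPicard hF hab ξ v t) ≤ K * ∫ s in t..b, B s := by
  have hint (u : C(Icc a b, E)) : IntervalIntegrable (fun s ↦ F s (IccExtend hab u s)) volume t b :=
    intervalIntegrable_of_mem_Icc (hF.intervalIntegrable_IccExtend hab u) t.2 (right_mem_Icc.2 hab)
  calc dist (backwardPicard hF hab ξ u t) (backwardPicard hF hab ξ v t)
      = ‖∫ s in t..b, (F s (IccExtend hab u s) - F s (IccExtend hab v s))‖ := by
        rw [intervalIntegral.integral_sub (hint u) (hint v), ← dist_eq_norm]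
        exact dist_add_left _ _ _
    _ ≤ ∫ s in t..b, K * B s := by
        refine intervalIntegral.norm_integral_le_of_norm_le t.2.2 (.of_forall fun s hs ↦ ?_)
          ((hB.const_mul K).intervalIntegrable _ _)
        have hs' : s ∈ Icc a b := ⟨t.2.1.trans hs.1.le, hs.2⟩
        rw [IccExtend_of_mem hab u hs', IccExtend_of_mem hab v hs', ← dist_eq_norm]
        exact ((hF.lipschitzOnWith s hs').dist_le_mul _ trivial _ trivial).trans <| by
          gcongr
          exact huv ⟨s, hs'⟩
    _ = K * ∫ s in t..b, B s := intervalIntegral.integral_const_mul _ _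

theorem dist_iterate_backwardPicard_apply_le (u v : C(Icc a b, E)) (n : ℕ) (t : Icc a b) :
    dist ((backwardPicard hF hab ξ)^[n] u t) ((backwardPicard hF hab ξ)^[n] v t) ≤
      (K * (b - t)) ^ n / n.factorial * dist u v := by
  induction n generalizing t with
  | zero => simpa using ContinuousMap.dist_apply_le_dist (f := u) (g := v) t
  | succ n ih =>
    rw [Function.iterate_succ_apply', Function.iterate_succ_apply']
    refine (dist_backwardPicard_apply_le_integral hF hab ξ _ _
      (B := fun s ↦ (K * (b - s)) ^ n / n.factorial * dist u v) (by fun_prop) ih t).trans_eq ?_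
    have hintegral : ∫ s in t..b, (b - s) ^ n = (b - t) ^ (n + 1) / (n + 1) := by
      rw [intervalIntegral.integral_comp_sub_left fun s ↦ s ^ n]
      simp
    simp only [mul_pow, intervalIntegral.integral_mul_const, intervalIntegral.integral_div,
      intervalIntegral.integral_const_mul, hintegral, Nat.factorial_succ, Nat.cast_mul,
      Nat.cast_add_one]
    field

theorem exists_contractingWith_iterate_backwardPicard :
    ∃ (n : ℕ) (C : ℝ≥0), ContractingWith C (backwardPicard hF hab ξ)^[n] := by
  obtain ⟨n, hn⟩ := ((FloorSemiring.tendsto_pow_div_factorial_atTop (K * (b - a))).eventually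
    (gt_mem_nhds zero_lt_one)).exists
  have : 0 ≤ b - a := sub_nonneg.2 hab
  refine ⟨n, NNReal.mk _ (by positivity), hn, LipschitzWith.of_dist_le_mul fun u v ↦ ?_⟩
  refine (ContinuousMap.dist_le (by positivity)).2 fun t ↦ ?_
  refine (dist_iterate_backwardPicard_apply_le hF hab ξ u v n t).trans ?_
  rw [NNReal.coe_mk]
  gcongr
  exacts [mul_nonneg K.2 (sub_nonneg.2 t.2.2), t.2.1]

theorem IsCaratheodoryOn.exists_isBackwardSolution [CompleteSpace E]
    (hF : IsCaratheodoryOn F K a b univ) (hab : a ≤ b) (ξ : E) :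
    ∃ y, IsBackwardSolution F a b ξ y := by
  obtain ⟨n, C, hC⟩ := exists_contractingWith_iterate_backwardPicard hF hab ξ
  obtain ⟨u, hu⟩ : ∃ u, Function.IsFixedPt (backwardPicard hF hab ξ) u :=
    ⟨_, hC.isFixedPt_fixedPoint_iterate⟩
  refine ⟨IccExtend hab u, hF.intervalIntegrable_IccExtend hab u, fun t ht ↦ ?_⟩
  rw [IccExtend_of_mem hab _ ht]
  exact (DFunLike.congr_fun hu ⟨t, ht⟩).symm

end Existence

end Generator

section Real

variable {F G : ℝ → ℝ → ℝ} {K : ℝ≥0} {a b c d ξ η A B ε : ℝ} {y z : ℝ → ℝ}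

theorem continuous_gronwallBound (δ K ε : ℝ) : Continuous (gronwallBound δ K ε) :=
  continuous_iff_continuousAt.2 fun x ↦ (hasDerivAt_gronwallBound δ K ε x).continuousAt

theorem gronwallBound_mem_Icc {δ K ε x X : ℝ} (hδ : 0 ≤ δ) (hK : 0 ≤ K) (hε : 0 ≤ ε)
    (hx : x ∈ Icc 0 X) : gronwallBound δ K ε x ∈ Icc δ (gronwallBound δ K ε X) :=
  have hmono := gronwallBound_mono hδ hε hK
  ⟨(gronwallBound_x0 δ K ε).symm.trans_le (hmono hx.1), hmono hx.2⟩

theorem isBackwardSolution_gronwallBound (hab : a ≤ b) (ξ A B : ℝ) :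
    IsBackwardSolution (fun _ x ↦ A * x + B) a b ξ fun t ↦ gronwallBound ξ A B (b - t) := by
  have hcont := continuous_gronwallBound ξ A B
  simpa only [sub_self, gronwallBound_x0] using
    IsBackwardSolution.of_hasDerivAt (F := fun _ x ↦ A * x + B)
      (y := fun t ↦ gronwallBound ξ A B (b - t)) hab (by fun_prop)
      fun s _ ↦ (hasDerivAt_gronwallBound ξ A B (b - s)).comp_const_sub b s

-- The constant of integration is fixed at the initial time `a`, not at `b`: the solution then
-- starts at `c` and stays above it, and the size of `ε` only matters for its terminal value.
theorem isBackwardSolution_add_gronwallBound (hab : a ≤ b) (c K ε : ℝ) :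
    IsBackwardSolution (fun s _ ↦ -(K * gronwallBound 0 K ε (s - a) + ε)) a b
      (c + gronwallBound 0 K ε (b - a)) fun t ↦ c + gronwallBound 0 K ε (t - a) := by
  have hcont := continuous_gronwallBound 0 K ε
  refine .of_hasDerivAt (y := fun t ↦ c + gronwallBound 0 K ε (t - a)) hab (by fun_prop)
    fun s _ ↦ ?_
  rw [neg_neg]
  exact (hasDerivAt_gronwallBound_shift 0 K ε s a).const_add c

namespace IsBackwardSolution

theorem le_of_lipschitzWith (hy : IsBackwardSolution F a b ξ y) (hz : IsBackwardSolution G a b η z)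
    (hξη : ξ ≤ η) (hG : ∀ s ∈ Icc a b, LipschitzWith K (G s))
    (hFG : ∀ s ∈ Icc a b, z s < y s → F s (y s) ≤ G s (y s)) {t : ℝ} (ht : t ∈ Icc a b) :
    y t ≤ z t := by
  have hb : b ∈ Icc a b := right_mem_Icc.2 (ht.1.trans ht.2)
  have hyb : y b = ξ := by simpa using hy.eq_add_integral b hb
  have hzb : z b = η := by simpa using hz.eq_add_integral b hb
  refine sub_nonpos.1 (nonpos_of_eq_add_integral_left (w := fun t ↦ y t - z t) K.2
    (hy.intervalIntegrable.sub hz.intervalIntegrable) (by linarith) (fun t ht ↦ ?_)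
    (fun s hs hzy ↦ ?_) ht)
  · rw [intervalIntegral.integral_sub (intervalIntegrable_of_mem_Icc hy.intervalIntegrable ht hb)
      (intervalIntegrable_of_mem_Icc hz.intervalIntegrable ht hb), hyb, hzb,
      hy.eq_add_integral t ht, hz.eq_add_integral t ht]
    ring
  · calc F s (y s) - G s (z s) ≤ G s (y s) - G s (z s) :=
        sub_le_sub_right (hFG s hs (sub_pos.1 hzy)) _
      _ ≤ K * dist (y s) (z s) := (le_abs_self _).trans ((hG s hs).dist_le_mul _ _)
      _ = K * (y s - z s) := by rw [Real.dist_eq, abs_of_pos hzy]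

theorem le_gronwallBound (hy : IsBackwardSolution F a b ξ y)
    (hF : ∀ s ∈ Icc a b, gronwallBound ξ A B (b - s) < y s → F s (y s) ≤ A * y s + B)
    {t : ℝ} (ht : t ∈ Icc a b) : y t ≤ gronwallBound ξ A B (b - t) := by
  have hLip : LipschitzWith ‖A‖₊ fun x ↦ A * x + B :=
    LipschitzWith.of_dist_le_mul fun x x' ↦ by simp [Real.dist_eq, ← mul_sub, abs_mul]
  exact hy.le_of_lipschitzWith (isBackwardSolution_gronwallBound (ht.1.trans ht.2) ξ A B) le_rfl
    (fun _ _ ↦ hLip) hF ht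

theorem le_of_neg_le (hy : IsBackwardSolution F a b ξ y)
    (hLip : ∀ s ∈ Icc a b, LipschitzWith K (F s)) (hε : 0 ≤ ε) (hFc : ∀ s ∈ Icc a b, -ε ≤ F s c)
    (hξ : c + gronwallBound 0 K ε (b - a) ≤ ξ) {t : ℝ} (ht : t ∈ Icc a b) : c ≤ y t := by
  have hnonneg (s : ℝ) (hs : s ∈ Icc a b) : 0 ≤ gronwallBound 0 K ε (s - a) :=
    (gronwallBound_mem_Icc le_rfl K.2 hε ⟨sub_nonneg.2 hs.1, le_rfl⟩).1
  have hbarrier := isBackwardSolution_add_gronwallBound (ht.1.trans ht.2) c K ε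
  refine (le_add_of_nonneg_right (hnonneg t ht)).trans
    (hbarrier.le_of_lipschitzWith hy hξ hLip (fun s hs _ ↦ ?_) ht)
  have hdist := (hLip s hs).dist_le_mul (c + gronwallBound 0 K ε (s - a)) c
  rw [Real.dist_eq, Real.dist_eq, add_sub_cancel_left, abs_of_nonneg (hnonneg s hs)] at hdist
  linarith [neg_le_of_abs_le hdist, hFc s hs]

end IsBackwardSolution

/-- The generator `F` with its space variable clamped to `[c, d]`, which turns regularity on
`[c, d]` into global regularity. -/
noncomputable def spaceTruncation (hcd : c ≤ d) (F : ℝ → ℝ → ℝ) (t x : ℝ) : ℝ :=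
  F t (projIcc c d hcd x)

theorem spaceTruncation_of_mem (hcd : c ≤ d) {t x : ℝ} (hx : x ∈ Icc c d) :
    spaceTruncation hcd F t x = F t x := by
  rw [spaceTruncation, projIcc_of_mem hcd hx]

theorem IsCaratheodoryOn.spaceTruncation (hF : IsCaratheodoryOn F K a b (Icc c d)) (hcd : c ≤ d) :
    IsCaratheodoryOn (spaceTruncation hcd F) K a b univ where
  stronglyMeasurable x _ := hF.stronglyMeasurable _ (projIcc c d hcd x).2
  intervalIntegrable x _ := hF.intervalIntegrable _ (projIcc c d hcd x).2
  lipschitzOnWith t ht := by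
    have h := (hF.lipschitzOnWith t ht).to_restrict.comp (LipschitzWith.projIcc hcd)
    rw [mul_one] at h
    exact h.lipschitzOnWith

theorem exists_isBackwardSolution_pair_mem_Icc (hab : a ≤ b)
    (hF : IsCaratheodoryOn F K a b (Icc c d)) (hG : IsCaratheodoryOn G K a b (Icc c d))
    (hFG : ∀ s ∈ Icc a b, ∀ x ∈ Icc c d, F s x ≤ G s x) (hξη : ξ ≤ η)
    (hε : 0 ≤ ε) (hFc : ∀ s ∈ Icc a b, -ε ≤ F s c) (hξ : c + gronwallBound 0 K ε (b - a) ≤ ξ)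
    (hA : 0 ≤ A) (hGgrowth : ∀ s ∈ Icc a b, ∀ x ∈ Icc c d, G s x ≤ A * x + B)
    (hη : ∀ s ∈ Icc a b, gronwallBound η A B (b - s) ∈ Icc c d) :
    ∃ y z : ℝ → ℝ, IsBackwardSolution F a b ξ y ∧ IsBackwardSolution G a b η z ∧
      ∀ t ∈ Icc a b, c ≤ y t ∧ y t ≤ z t ∧ z t ≤ d := by
  have ha : a ∈ Icc a b := left_mem_Icc.2 hab
  have hcd : c ≤ d := (hη a ha).1.trans (hη a ha).2
  have hF' := hF.spaceTruncation hcd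
  have hG' := hG.spaceTruncation hcd
  obtain ⟨y, hy⟩ := hF'.exists_isBackwardSolution hab ξ
  obtain ⟨z, hz⟩ := hG'.exists_isBackwardSolution hab η
  have hcy (t : ℝ) (ht : t ∈ Icc a b) : c ≤ y t :=
    hy.le_of_neg_le (fun s hs ↦ lipschitzOnWith_univ.1 (hF'.lipschitzOnWith s hs)) hε
      (fun s hs ↦ by simpa only [spaceTruncation_of_mem hcd (left_mem_Icc.2 hcd)] using hFc s hs)
      hξ ht
  have hyz (t : ℝ) (ht : t ∈ Icc a b) : y t ≤ z t :=
    hy.le_of_lipschitzWith hz hξη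
      (fun s hs ↦ lipschitzOnWith_univ.1 (hG'.lipschitzOnWith s hs))
      (fun s hs _ ↦ hFG s hs _ (projIcc c d hcd _).2) ht
  have hzd (t : ℝ) (ht : t ∈ Icc a b) : z t ≤ d := by
    refine (hz.le_gronwallBound (fun s hs hlt ↦ ?_) ht).trans (hη t ht).2
    have hproj : (projIcc c d hcd (z s) : ℝ) ≤ z s :=
      max_le ((hη s hs).1.trans hlt.le) (min_le_right _ _)
    exact (hGgrowth s hs _ (projIcc c d hcd _).2).trans (by gcongr)
  refine ⟨y, z, hy.congr hab fun s hs ↦ ?_, hz.congr hab fun s hs ↦ ?_,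
    fun t ht ↦ ⟨hcy t ht, hyz t ht, hzd t ht⟩⟩
  · exact spaceTruncation_of_mem hcd ⟨hcy s hs, (hyz s hs).trans (hzd s hs)⟩
  · exact spaceTruncation_of_mem hcd ⟨(hcy s hs).trans (hyz s hs), hzd s hs⟩

theorem le_affine_of_le_quadratic {A B ε x d v : ℝ} (hε : 0 ≤ ε) (hx : 0 ≤ x) (hxd : x ≤ d)
    (hd : ε * d ^ 2 ≤ 1) (hv : v ≤ B + A * x + ε * x ^ 2) : v ≤ A * x + (B + 1) := by
  have hquad : ε * x ^ 2 ≤ ε * d ^ 2 := by gcongr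
  linarith

end Real

/-- Bounded solutions of the dominating ODEs in the case `σ₃ ≥ c₁⁻¹`,
`h ≥ c₂⁻¹` (Theorem 5.8, case (5.21)); solutions stay in `[c₃⁻¹, C₂]`. -/
theorem stmt10
    (T c2 c3 C1 C0 L : ℝ) (hT : 0 < T) (hc2 : 0 < c2) (hc23 : c2 < c3)
    (hC1 : 0 < C1) (hC0 : 0 ≤ C0) (hL : 0 < L)
    (hl hu : ℝ) (hlu : hl ≤ hu) (hhl : c2⁻¹ ≤ hl)
    (Fl Fu : ℝ → ℝ → ℝ)
    (hle : ∀ t ∈ Icc (0:ℝ) T, ∀ y : ℝ, Fl t y ≤ Fu t y)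
    (hmeasu : ∀ y : ℝ, Measurable fun t => Fu t y)
    (hmeasl : ∀ y : ℝ, Measurable fun t => Fl t y)
    (hLipu : ∀ t ∈ Icc (0:ℝ) T,
      LipschitzOnWith (Real.toNNReal L) (fun y => Fu t y)
        (Icc c3⁻¹ (Real.exp (C1 * T) * hu + ((C0 + 1) / C1) * (Real.exp (C1 * T) - 1))))
    (hLipl : ∀ t ∈ Icc (0:ℝ) T,
      LipschitzOnWith (Real.toNNReal L) (fun y => Fl t y)
        (Icc c3⁻¹ (Real.exp (C1 * T) * hu + ((C0 + 1) / C1) * (Real.exp (C1 * T) - 1))))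
    (hbdd : ∃ K : ℝ, ∀ t ∈ Icc (0:ℝ) T,
      ∀ y ∈ Icc c3⁻¹ (Real.exp (C1 * T) * hu + ((C0 + 1) / C1) * (Real.exp (C1 * T) - 1)),
      |Fu t y| + |Fl t y| ≤ K)
    (ε : ℝ) (hε : 0 < ε)
    (hgrowu : ∀ t ∈ Icc (0:ℝ) T,
      ∀ y ∈ Icc c3⁻¹ (Real.exp (C1 * T) * hu + ((C0 + 1) / C1) * (Real.exp (C1 * T) - 1)),
      Fu t y ≤ C0 + C1 * y + ε * y ^ 2)
    (hFl : ∀ t ∈ Icc (0:ℝ) T, -ε ≤ Fl t c3⁻¹)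
    (hεC2 : ε * (Real.exp (C1 * T) * hu + ((C0 + 1) / C1) * (Real.exp (C1 * T) - 1)) ^ 2 ≤ 1)
    (hεsmall : ε * (Real.exp (L * T) - 1) / L ≤ c2⁻¹ - c3⁻¹) :
    ∃ yu yl : ℝ → ℝ,
      ContinuousOn yu (Icc 0 T) ∧ ContinuousOn yl (Icc 0 T) ∧
      (∀ t ∈ Icc (0:ℝ) T, yu t = hu + ∫ s in t..T, Fu s (yu s)) ∧
      (∀ t ∈ Icc (0:ℝ) T, yl t = hl + ∫ s in t..T, Fl s (yl s)) ∧
      (∀ t ∈ Icc (0:ℝ) T, c3⁻¹ ≤ yl t ∧ yl t ≤ yu t ∧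
        yu t ≤ Real.exp (C1 * T) * hu + ((C0 + 1) / C1) * (Real.exp (C1 * T) - 1)) := by
  obtain ⟨M, hM⟩ := hbdd
  have hC2 : Real.exp (C1 * T) * hu + ((C0 + 1) / C1) * (Real.exp (C1 * T) - 1) =
      gronwallBound hu C1 (C0 + 1) T := by
    simp only [gronwallBound_of_K_ne_0 hC1.ne', mul_comm hu]
  rw [hC2] at hLipu hLipl hM hgrowu hεC2 ⊢
  have hc3_pos : 0 < c3⁻¹ := inv_pos.2 (hc2.trans hc23)
  have hc3_le : c3⁻¹ ≤ hu := (inv_anti₀ hc2 hc23.le).trans (hhl.trans hlu)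
  have hbarrier (s : ℝ) (hs : s ∈ Icc 0 T) : gronwallBound hu C1 (C0 + 1) (T - s) ∈
      Icc c3⁻¹ (gronwallBound hu C1 (C0 + 1) T) :=
    Icc_subset_Icc_left hc3_le <| gronwallBound_mem_Icc (hc3_pos.le.trans hc3_le) hC1.le
      (by positivity) ⟨sub_nonneg.2 hs.2, sub_le_self T hs.1⟩
  have hterminal : c3⁻¹ + gronwallBound 0 L.toNNReal ε (T - 0) ≤ hl := by
    simp only [Real.coe_toNNReal L hL.le, gronwallBound_of_K_ne_0 hL.ne', sub_zero, zero_mul,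
      zero_add, div_mul_eq_mul_div]
    linarith
  obtain ⟨yl, yu, hyl, hyu, hmem⟩ := exists_isBackwardSolution_pair_mem_Icc hT.le
    (.of_norm_le hT.le (fun x _ ↦ (hmeasl x).stronglyMeasurable)
      (fun t ht x hx ↦ (le_add_of_nonneg_left (abs_nonneg _)).trans (hM t ht x hx)) hLipl)
    (.of_norm_le hT.le (fun x _ ↦ (hmeasu x).stronglyMeasurable)
      (fun t ht x hx ↦ (le_add_of_nonneg_right (abs_nonneg _)).trans (hM t ht x hx)) hLipu)
    (fun s hs x _ ↦ hle s hs x) hlu hε.le hFl hterminal hC1.le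
    (fun s hs x hx ↦ le_affine_of_le_quadratic hε.le (hc3_pos.le.trans hx.1) hx.2 hεC2
      (hgrowu s hs x hx)) hbarrier
  exact ⟨yu, yl, hyu.continuousOn, hyl.continuousOn, hyu.eq_add_integral, hyl.eq_add_integral, hmem⟩
end

section
/- Let ε > 0, m ∈ ℝ, h < m, and T ≥ (m − h)²/(2ε). Then there is no continuous function y : [0,T] → ℝ with y(t) < m for all t ∈ [0,T] satisfying y(t) = h + ∫_t^T ε/(m − y(s)) ds for all t ∈ [0,T]. (Indeed, any such solution must satisfy (m − y(t))² = (m − h)² − 2ε(T − t), which reaches 0 at t = T − (m − h)²/(2ε).) -/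
open MeasureTheory Set

/-!
The squared distance to the singular level is a first integral up to drift: along a solution,
`d/dt (m - y)² = -2 (m - y) y' = 2ε`, because the generator cancels the factor `m - y`. So
`(m - y)²` is affine in time, and running backwards from `(m - h)²` it is used up after time
`(m - h)² / (2ε)`.
-/

/-- `y` is a solution on `[a, T]` of the backward ODE with generator `F` and terminal value `h`, in
integral form. Only the values of `y` on `[a, T]` matter; integrability of `F ∘ y` is not part of
the definition, and without it the integral has the junk value `0`. -/
structure IsBackwardSolution_s15 {E : Type*} [NormedAddCommGroup E] [NormedSpace ℝ E]
    (F : E → E) (a T : ℝ) (h : E) (y : ℝ → E) : Prop where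
  continuousOn : ContinuousOn y (Icc a T)
  eq_add_integral : ∀ t ∈ Icc a T, y t = h + ∫ s in t..T, F (y s)

theorem eq_add_smul_of_hasDerivWithinAt_const {E : Type*} [NormedAddCommGroup E] [NormedSpace ℝ E]
    {f : ℝ → E} {c : E} {S : Set ℝ} (hS : Convex ℝ S) (hf : ∀ t ∈ S, HasDerivWithinAt f c S t)
    {s t : ℝ} (hs : s ∈ S) (ht : t ∈ S) : f t = f s + (t - s) • c := by
  have hderiv : ∀ r ∈ S, HasDerivWithinAt (fun r ↦ f r - r • c) 0 S r := fun r hr ↦ by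
    simpa using! (hf r hr).sub ((hasDerivWithinAt_id r S).smul_const c)
  have hconst : f t - t • c = f s - s • c := by
    simpa [sub_eq_zero] using
      hS.norm_image_sub_le_of_norm_hasDerivWithin_le hderiv (fun _ _ ↦ norm_zero.le) hs ht
  rw [sub_eq_iff_eq_add.1 hconst, sub_smul]
  abel

namespace IsBackwardSolution_s15

section NormedSpace

variable {E : Type*} [NormedAddCommGroup E] [NormedSpace ℝ E]
  {F : E → E} {a T : ℝ} {h : E} {y : ℝ → E}

theorem apply_terminal (hy : IsBackwardSolution_s15 F a T h y) (haT : a ≤ T) : y T = h := by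
  simpa using hy.eq_add_integral T (right_mem_Icc.2 haT)

theorem hasDerivWithinAt [CompleteSpace E] (hy : IsBackwardSolution_s15 F a T h y)
    (hFy : ContinuousOn (F ∘ y) (Icc a T)) {t : ℝ} (ht : t ∈ Icc a T) :
    HasDerivWithinAt y (-F (y t)) (Icc a T) t := by
  have hint : IntervalIntegrable (F ∘ y) volume t T :=
    (hFy.mono (Icc_subset_Icc_left ht.1)).intervalIntegrable_of_Icc ht.2
  have : Fact (t ∈ Icc a T) := ⟨ht⟩
  have hderiv : HasDerivWithinAt (fun u ↦ ∫ s in u..T, (F ∘ y) s) (-(F ∘ y) t) (Icc a T) t :=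
    intervalIntegral.integral_hasDerivWithinAt_left hint
      (hFy.stronglyMeasurableAtFilter_nhdsWithin measurableSet_Icc t) (hFy t ht)
  exact (hderiv.const_add h).congr hy.eq_add_integral (hy.eq_add_integral t ht)

theorem comp_eq_add_smul_of_hasFDerivAt [CompleteSpace E] {E' : Type*} [NormedAddCommGroup E']
    [NormedSpace ℝ E'] {G : E → E'} {G' : E → E →L[ℝ] E'} {c : E'}
    (hy : IsBackwardSolution_s15 F a T h y) (hFy : ContinuousOn (F ∘ y) (Icc a T))
    (hG : ∀ t ∈ Icc a T, HasFDerivAt G (G' (y t)) (y t))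
    (hc : ∀ t ∈ Icc a T, G' (y t) (F (y t)) = c) {t : ℝ} (ht : t ∈ Icc a T) :
    G (y t) = G h + (T - t) • c := by
  have hderiv : ∀ s ∈ Icc a T, HasDerivWithinAt (G ∘ y) (-c) (Icc a T) s := fun s hs ↦ by
    simpa [hc s hs] using (hG s hs).comp_hasDerivWithinAt s (hy.hasDerivWithinAt hFy hs)
  have haT : a ≤ T := ht.1.trans ht.2
  have haff : G (y t) = G (y T) + (t - T) • -c :=
    eq_add_smul_of_hasDerivWithinAt_const (convex_Icc a T) hderiv (right_mem_Icc.2 haT) ht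
  rw [haff, hy.apply_terminal haT, smul_neg, ← neg_smul, neg_sub]

end NormedSpace

section Singular

variable {ε m h a T : ℝ} {y : ℝ → ℝ}

theorem sq_sub_eq (hy : IsBackwardSolution_s15 (fun x ↦ ε / (m - x)) a T h y)
    (hym : ∀ t ∈ Icc a T, y t ≠ m) {t : ℝ} (ht : t ∈ Icc a T) :
    (m - y t) ^ 2 = (m - h) ^ 2 - 2 * ε * (T - t) := by
  have hne : ∀ s ∈ Icc a T, m - y s ≠ 0 := fun s hs ↦ sub_ne_zero.2 (hym s hs).symm
  have hcont : ContinuousOn ((fun x ↦ ε / (m - x)) ∘ y) (Icc a T) :=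
    continuousOn_const.div (continuousOn_const.sub hy.continuousOn) hne
  have hsq : ∀ x : ℝ, HasDerivAt (fun x ↦ (m - x) ^ 2) (-(2 * (m - x))) x := fun x ↦ by
    simpa using! ((hasDerivAt_id x).const_sub m).pow 2
  have hdrift : ∀ s ∈ Icc a T, ε / (m - y s) * -(2 * (m - y s)) = -(2 * ε) := fun s hs ↦ by
    have := hne s hs
    field_simp
  have hlin : (m - y t) ^ 2 = (m - h) ^ 2 + (T - t) • -(2 * ε) :=
    hy.comp_eq_add_smul_of_hasFDerivAt
      (G' := fun x ↦ ContinuousLinearMap.toSpanSingleton ℝ (-(2 * (m - x))))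
      hcont (fun s _ ↦ (hsq (y s)).hasFDerivAt) hdrift ht
  rw [hlin, smul_eq_mul]
  ring

theorem sub_lt_sq_div (hy : IsBackwardSolution_s15 (fun x ↦ ε / (m - x)) a T h y)
    (hym : ∀ t ∈ Icc a T, y t ≠ m) (hε : 0 < ε) :
    T - a < (m - h) ^ 2 / (2 * ε) := by
  rcases lt_or_ge T a with hTa | haT
  · exact (sub_neg.2 hTa).trans_le (by positivity)
  have ha : a ∈ Icc a T := left_mem_Icc.2 haT
  have hpos : 0 < (m - y a) ^ 2 := sq_pos_of_ne_zero (sub_ne_zero.2 (hym a ha).symm)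
  rw [lt_div_iff₀ (by positivity)]
  linarith [hy.sq_sub_eq hym ha]

end Singular

end IsBackwardSolution_s15

/-- Explicit singularity example: the backward ODE with generator `ε/(m − y)`
has no solution staying below the singular level `m` once
`T ≥ (m − h)²/(2ε)`; any such solution would satisfy
`(m − y(t))² = (m − h)² − 2ε(T − t)`. -/
theorem stmt15
    (ε m h T : ℝ) (hε : 0 < ε) (hhm : h < m)
    (hT : (m - h) ^ 2 / (2 * ε) ≤ T) :
    (¬ ∃ y : ℝ → ℝ, ContinuousOn y (Icc 0 T) ∧
        (∀ t ∈ Icc (0:ℝ) T, y t < m) ∧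
        ∀ t ∈ Icc (0:ℝ) T, y t = h + ∫ s in t..T, ε / (m - y s)) ∧
    (∀ y : ℝ → ℝ, ContinuousOn y (Icc 0 T) →
      (∀ t ∈ Icc (0:ℝ) T, y t < m) →
      (∀ t ∈ Icc (0:ℝ) T, y t = h + ∫ s in t..T, ε / (m - y s)) →
      ∀ t ∈ Icc (0:ℝ) T, (m - y t) ^ 2 = (m - h) ^ 2 - 2 * ε * (T - t)) := by
  refine ⟨?_, fun y hcont hlt heq t ht ↦
    IsBackwardSolution_s15.sq_sub_eq ⟨hcont, heq⟩ (fun s hs ↦ (hlt s hs).ne) ht⟩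
  rintro ⟨y, hcont, hlt, heq⟩
  have hlife : T - 0 < (m - h) ^ 2 / (2 * ε) :=
    IsBackwardSolution_s15.sub_lt_sq_div ⟨hcont, heq⟩ (fun s hs ↦ (hlt s hs).ne) hε
  linarith
end

section
/- Define ψ₁, ψ₂ : [2, ∞) → ℝ by ψ₁(2) = ψ₂(2) = 1 and, for p > 2, ψ₁(p) = 2^{−1/p} p^{1/2} ((2^{p/2} − 2)/(p − 2))^{1/2 − 1/p} and ψ₂(p) = ((p−1)/2)^{1/p} p^{1/2} (2^{p/2} + (2^{p/2} − 2)/(p − 2))^{1/2 − 1/p}. Then, for i = 1, 2, the function ψᵢ is continuous on [2, ∞), strictly increasing on [2, ∞), satisfies ψᵢ(2) = 1, and ψᵢ(p) → ∞ as p → ∞. -/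
open Set Filter Real

/-!
On `[2, ∞)` both constants have the form `A p * B p ^ (1 / 2 - 1 / p)`, with `A` strictly
increasing from `A 2 = 1` to `∞` and `B ≥ 1` increasing. The exponent is nonnegative, increasing and
vanishes at `2`, so everything is inherited from `A`. Absorbing powers of `2` turns the difference
quotient into `(2 ^ (p / 2) - 2) / (p / 2 - 1)`, the slope of the convex function `t ↦ 2 ^ t`
between `1` and `p / 2`, which extends continuously to `p = 2` and increases from `2 * log 2 > 1`.
For `ψ₂` the prefactor is `√(p / 2) * (p - 1) ^ (1 / p)`; its logarithmic derivative is positive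
because `log (p - 1) < p / 2`.
-/

lemma eqOn_Ici_of_eqOn_Ioi {α β : Type*} [PartialOrder α] {f g : α → β} {a : α}
    (ha : f a = g a) (h : EqOn f g (Ioi a)) : EqOn f g (Ici a) := fun x hx ↦
  (eq_or_lt_of_le hx).elim (fun hax ↦ hax ▸ ha) (@h x)

section MulRpow

variable {α : Type*} [Preorder α] {S : Set α} {A B s : α → ℝ}

lemma monotoneOn_rpow (hB : MonotoneOn B S) (hB_one : ∀ x ∈ S, 1 ≤ B x)
    (hs : MonotoneOn s S) (hs_nonneg : ∀ x ∈ S, 0 ≤ s x) :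
    MonotoneOn (fun x ↦ B x ^ s x) S := fun x hx y hy hxy ↦
  calc B x ^ s x
      ≤ B y ^ s x :=
        rpow_le_rpow (zero_le_one.trans (hB_one x hx)) (hB hx hy hxy) (hs_nonneg x hx)
    _ ≤ B y ^ s y := rpow_le_rpow_of_exponent_le (hB_one y hy) (hs hx hy hxy)

lemma strictMonoOn_mul_rpow (hA : StrictMonoOn A S) (hA_nonneg : ∀ x ∈ S, 0 ≤ A x)
    (hB : MonotoneOn B S) (hB_one : ∀ x ∈ S, 1 ≤ B x)
    (hs : MonotoneOn s S) (hs_nonneg : ∀ x ∈ S, 0 ≤ s x) :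
    StrictMonoOn (fun x ↦ A x * B x ^ s x) S := fun x hx y hy hxy ↦
  mul_lt_mul (hA hx hy hxy) (monotoneOn_rpow hB hB_one hs hs_nonneg hx hy hxy.le)
    (rpow_pos_of_pos (zero_lt_one.trans_le (hB_one x hx)) _) (hA_nonneg y hy)

end MulRpow

lemma tendsto_mul_rpow_atTop {α : Type*} {l : Filter α} {A B s : α → ℝ}
    (hA : Tendsto A l atTop) (hB : ∀ᶠ x in l, 1 ≤ B x) (hs : ∀ᶠ x in l, 0 ≤ s x) :
    Tendsto (fun x ↦ A x * B x ^ s x) l atTop := by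
  refine tendsto_atTop_mono' l ?_ hA
  filter_upwards [hA.eventually_ge_atTop 0, hB, hs] with x hAx hBx hsx
  exact le_mul_of_one_le_right hAx (one_le_rpow hBx hsx)

lemma monotoneOn_dslope_of_convexOn {S : Set ℝ} {f : ℝ → ℝ} {a : ℝ} (hf : ConvexOn ℝ S f)
    (ha : a ∈ S) (hfa : DifferentiableAt ℝ f a) : MonotoneOn (dslope f a) S := by
  intro x hx y hy hxy
  rcases eq_or_ne x a with hxa | hxa <;> rcases eq_or_ne y a with hya | hya
  · rw [hxa, hya]
  · rw [hxa] at hxy ⊢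
    rw [dslope_same, dslope_of_ne f hya]
    exact hf.deriv_le_slope ha hy (hxy.lt_of_ne' hya) hfa
  · rw [hya] at hxy ⊢
    rw [dslope_same, dslope_of_ne f hxa, slope_comm]
    exact hf.slope_le_deriv hx ha (hxy.lt_of_ne hxa) hfa
  · rw [dslope_of_ne f hxa, dslope_of_ne f hya]
    exact hf.slope_mono ha ⟨hx, hxa⟩ ⟨hy, hya⟩ hxy

/-- The slope of `t ↦ 2 ^ t` between `1` and `t`, extended by the derivative at `t = 1`.
At `t = p / 2` it is twice the difference quotient `(2 ^ (p / 2) - 2) / (p - 2)`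
of both constants. -/
noncomputable def twoRpowSlope : ℝ → ℝ := dslope (fun t : ℝ ↦ (2 : ℝ) ^ t) 1

lemma hasDerivAt_two_rpow_one : HasDerivAt (fun t : ℝ ↦ (2 : ℝ) ^ t) (2 * log 2) 1 := by
  simpa [mul_comm] using (hasDerivAt_id (1 : ℝ)).const_rpow two_pos

lemma twoRpowSlope_one : twoRpowSlope 1 = 2 * log 2 := by
  rw [twoRpowSlope, dslope_same, hasDerivAt_two_rpow_one.deriv]

lemma twoRpowSlope_of_ne {t : ℝ} (ht : t ≠ 1) : twoRpowSlope t = (2 ^ t - 2) / (t - 1) := by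
  rw [twoRpowSlope, dslope_of_ne _ ht, slope_def_field, rpow_one]

lemma twoRpowSlope_half {p : ℝ} (hp : p ≠ 2) :
    twoRpowSlope (p / 2) = 2 * ((2 ^ (p / 2) - 2) / (p - 2)) := by
  have hp_half : p / 2 ≠ 1 := fun h ↦ hp (by linarith)
  have hp_sub : p - 2 ≠ 0 := sub_ne_zero.2 hp
  rw [twoRpowSlope_of_ne hp_half]
  field_simp

lemma continuous_twoRpowSlope : Continuous twoRpowSlope := by
  rw [← continuousOn_univ, twoRpowSlope, continuousOn_dslope univ_mem]
  exact ⟨(continuous_const_rpow two_ne_zero).continuousOn,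
    hasDerivAt_two_rpow_one.differentiableAt⟩

lemma monotone_twoRpowSlope : Monotone twoRpowSlope :=
  monotoneOn_univ.1 <| monotoneOn_dslope_of_convexOn (convexOn_rpow_left two_pos) (mem_univ 1)
    hasDerivAt_two_rpow_one.differentiableAt

lemma one_le_twoRpowSlope {t : ℝ} (ht : 1 ≤ t) : 1 ≤ twoRpowSlope t :=
  calc (1 : ℝ) ≤ 2 * log 2 := by linarith [log_two_gt_d9]
    _ = twoRpowSlope 1 := twoRpowSlope_one.symm
    _ ≤ twoRpowSlope t := monotone_twoRpowSlope ht

lemma monotoneOn_half_sub_one_div : MonotoneOn (fun p : ℝ ↦ 1 / 2 - 1 / p) (Ioi 0) :=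
  fun _ hp _ _ hpq ↦ sub_le_sub_left (one_div_le_one_div_of_le hp hpq) _

lemma half_sub_one_div_nonneg {p : ℝ} (hp : 2 ≤ p) : 0 ≤ 1 / 2 - 1 / p :=
  sub_nonneg.2 (one_div_le_one_div_of_le two_pos hp)

lemma continuousOn_half_sub_one_div : ContinuousOn (fun p : ℝ ↦ 1 / 2 - 1 / p) (Ioi 0) :=
  continuousOn_const.sub (continuousOn_const.div continuousOn_id fun _ hp ↦ ne_of_gt hp)

lemma strictMonoOn_sqrt_half : StrictMonoOn (fun p : ℝ ↦ √(p / 2)) (Ici 0) :=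
  fun _ hp _ _ hpq ↦ sqrt_lt_sqrt (div_nonneg hp zero_le_two) (div_lt_div_of_pos_right hpq two_pos)

lemma tendsto_sqrt_half_atTop : Tendsto (fun p : ℝ ↦ √(p / 2)) atTop atTop :=
  tendsto_sqrt_atTop.comp (tendsto_id.atTop_div_const two_pos)

lemma log_lt_half {x : ℝ} (hx : 0 < x) : log x < x / 2 := by
  have tangent : log (x / 2) ≤ x / 2 - 1 := log_le_sub_one_of_pos (half_pos hx)
  rw [log_div hx.ne' two_ne_zero] at tangent
  linarith [log_two_lt_d9]

lemma hasDerivAt_log_half_div_two_add {p : ℝ} (hp : 1 < p) :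
    HasDerivAt (fun p : ℝ ↦ log (p / 2) / 2 + log (p - 1) / p)
      ((p / 2 - log (p - 1) + p / (p - 1)) / p ^ 2) p := by
  have hp0 : p ≠ 0 := by linarith
  have hp1 : p - 1 ≠ 0 := by linarith
  have h_log_half := (((hasDerivAt_id p).div_const 2).log (by simpa using hp0)).div_const 2
  have h_log_sub := (((hasDerivAt_id p).sub_const 1).log hp1).div (hasDerivAt_id p) hp0
  convert! h_log_half.add h_log_sub using 1
  simp only [id]
  field_simp
  ring

lemma strictMonoOn_log_half_div_two_add :
    StrictMonoOn (fun p : ℝ ↦ log (p / 2) / 2 + log (p - 1) / p) (Ioi 1) := by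
  refine strictMonoOn_of_hasDerivWithinAt_pos (convex_Ioi 1)
    (fun p hp ↦ (hasDerivAt_log_half_div_two_add hp).continuousAt.continuousWithinAt)
    (fun p hp ↦ (hasDerivAt_log_half_div_two_add (interior_subset hp)).hasDerivWithinAt) ?_
  intro p hp
  have hp1 : 0 < p - 1 := sub_pos.2 (interior_subset hp)
  have hlog : log (p - 1) < p / 2 := by linarith [log_lt_half hp1]
  have : 0 < p / 2 - log (p - 1) := sub_pos.2 hlog
  have : 0 < p := by linarith
  positivity

lemma sqrt_half_mul_rpow_eq_exp {p : ℝ} (hp : 1 < p) :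
    √(p / 2) * (p - 1) ^ (1 / p) = exp (log (p / 2) / 2 + log (p - 1) / p) := by
  rw [exp_add, exp_half, exp_log (by linarith), rpow_def_of_pos (by linarith), mul_one_div]

lemma strictMonoOn_sqrt_half_mul_rpow :
    StrictMonoOn (fun p : ℝ ↦ √(p / 2) * (p - 1) ^ (1 / p)) (Ioi 1) :=
  (exp_strictMono.comp_strictMonoOn strictMonoOn_log_half_div_two_add).congr
    fun _ hp ↦ (sqrt_half_mul_rpow_eq_exp hp).symm

lemma continuousOn_sqrt_half_mul_rpow :
    ContinuousOn (fun p : ℝ ↦ √(p / 2) * (p - 1) ^ (1 / p)) (Ioi 1) :=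
  ContinuousOn.congr (fun _ hp ↦
    (hasDerivAt_log_half_div_two_add hp).exp.continuousAt.continuousWithinAt)
    fun _ hp ↦ sqrt_half_mul_rpow_eq_exp hp

lemma tendsto_sqrt_half_mul_rpow_atTop :
    Tendsto (fun p : ℝ ↦ √(p / 2) * (p - 1) ^ (1 / p)) atTop atTop :=
  tendsto_mul_rpow_atTop tendsto_sqrt_half_atTop
    ((eventually_ge_atTop 2).mono fun p hp ↦ by linarith)
    ((eventually_ge_atTop 0).mono fun p hp ↦ one_div_nonneg.2 hp)

lemma sqrt_half_mul_rpow_mul_rpow {p c x : ℝ} (hp : 0 ≤ p) (hc : 0 ≤ c) (hx : 0 ≤ x) :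
    √(p / 2) * c ^ (1 / p) * (2 * x) ^ (1 / 2 - 1 / p) =
      (c / 2) ^ (1 / p) * p ^ ((1 : ℝ) / 2) * x ^ (1 / 2 - 1 / p) := by
  rw [sqrt_eq_rpow, div_rpow hp zero_le_two, mul_rpow zero_le_two hx, div_rpow hc zero_le_two,
    rpow_sub two_pos]
  field_simp

/-- The constant `ψ₁`, with powers of `2` moved so that the formula is also valid at `p = 2`. -/
noncomputable def bdgConstOne (p : ℝ) : ℝ :=
  √(p / 2) * twoRpowSlope (p / 2) ^ (1 / 2 - 1 / p)

/-- The constant `ψ₂`, with powers of `2` moved so that the formula is also valid at `p = 2`. -/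
noncomputable def bdgConstTwo (p : ℝ) : ℝ :=
  √(p / 2) * (p - 1) ^ (1 / p) *
    (2 * 2 ^ (p / 2) + twoRpowSlope (p / 2)) ^ (1 / 2 - 1 / p)

lemma bdgConstOne_two : bdgConstOne 2 = 1 := by
  norm_num [bdgConstOne]

lemma bdgConstTwo_two : bdgConstTwo 2 = 1 := by
  norm_num [bdgConstTwo]

lemma bdgConstOne_of_two_lt {p : ℝ} (hp : 2 < p) :
    bdgConstOne p = (2 : ℝ) ^ (-(1 / p)) * p ^ ((1 : ℝ) / 2) *
      (((2 : ℝ) ^ (p / 2) - 2) / (p - 2)) ^ ((1 : ℝ) / 2 - 1 / p) := by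
  have hslope := one_le_twoRpowSlope (by linarith : 1 ≤ p / 2)
  rw [twoRpowSlope_half hp.ne'] at hslope
  have absorb := sqrt_half_mul_rpow_mul_rpow (by linarith : 0 ≤ p) zero_le_one
    (by linarith : 0 ≤ ((2 : ℝ) ^ (p / 2) - 2) / (p - 2))
  rwa [one_rpow, mul_one, one_div 2, inv_rpow zero_le_two, ← rpow_neg zero_le_two,
    ← one_div 2, ← twoRpowSlope_half hp.ne'] at absorb

lemma bdgConstTwo_of_two_lt {p : ℝ} (hp : 2 < p) :
    bdgConstTwo p = ((p - 1) / 2) ^ (1 / p) * p ^ ((1 : ℝ) / 2) *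
      ((2 : ℝ) ^ (p / 2) + ((2 : ℝ) ^ (p / 2) - 2) / (p - 2)) ^ ((1 : ℝ) / 2 - 1 / p) := by
  have hslope := one_le_twoRpowSlope (by linarith : 1 ≤ p / 2)
  rw [twoRpowSlope_half hp.ne'] at hslope
  have hpow : 0 < (2 : ℝ) ^ (p / 2) := rpow_pos_of_pos two_pos _
  rw [bdgConstTwo, twoRpowSlope_half hp.ne', ← mul_add,
    sqrt_half_mul_rpow_mul_rpow (by linarith) (by linarith) (by linarith)]

lemma one_le_two_mul_rpow_add_twoRpowSlope {p : ℝ} (hp : 2 ≤ p) :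
    1 ≤ 2 * 2 ^ (p / 2) + twoRpowSlope (p / 2) :=
  (one_le_twoRpowSlope (by linarith)).trans (le_add_of_nonneg_left (by positivity))

lemma monotone_two_mul_rpow_add_twoRpowSlope :
    Monotone (fun p : ℝ ↦ 2 * 2 ^ (p / 2) + twoRpowSlope (p / 2)) := fun p q hpq ↦ by
  have hpq_half : p / 2 ≤ q / 2 := by linarith
  have hslope := monotone_twoRpowSlope hpq_half
  dsimp only
  gcongr
  exact one_le_two

lemma continuousOn_bdgConstOne : ContinuousOn bdgConstOne (Ici 2) := by
  have hslope : Continuous fun p : ℝ ↦ twoRpowSlope (p / 2) :=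
    continuous_twoRpowSlope.comp (continuous_id.div_const 2)
  refine ContinuousOn.mul (by fun_prop) (hslope.continuousOn.rpow
    (continuousOn_half_sub_one_div.mono (Ici_subset_Ioi.2 two_pos)) fun p hp ↦ Or.inl ?_)
  exact (zero_lt_one.trans_le (one_le_twoRpowSlope ((one_le_div two_pos).2 hp))).ne'

lemma continuousOn_bdgConstTwo : ContinuousOn bdgConstTwo (Ici 2) := by
  have hpow : Continuous fun p : ℝ ↦ (2 : ℝ) ^ (p / 2) :=
    (continuous_const_rpow two_ne_zero).comp (continuous_id.div_const 2)
  have hslope : Continuous fun p : ℝ ↦ twoRpowSlope (p / 2) :=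
    continuous_twoRpowSlope.comp (continuous_id.div_const 2)
  refine (continuousOn_sqrt_half_mul_rpow.mono (Ici_subset_Ioi.2 one_lt_two)).mul
    (((hpow.const_mul 2).add hslope).continuousOn.rpow
      (continuousOn_half_sub_one_div.mono (Ici_subset_Ioi.2 two_pos)) fun p hp ↦ Or.inl ?_)
  exact (zero_lt_one.trans_le (one_le_two_mul_rpow_add_twoRpowSlope hp)).ne'

lemma strictMonoOn_bdgConstOne : StrictMonoOn bdgConstOne (Ici 2) :=
  strictMonoOn_mul_rpow (strictMonoOn_sqrt_half.mono (Ici_subset_Ici.2 zero_le_two))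
    (fun _ _ ↦ sqrt_nonneg _)
    (fun _ _ _ _ hpq ↦ monotone_twoRpowSlope (div_le_div_of_nonneg_right hpq zero_le_two))
    (fun _ hp ↦ one_le_twoRpowSlope ((one_le_div two_pos).2 hp))
    (monotoneOn_half_sub_one_div.mono (Ici_subset_Ioi.2 two_pos))
    (fun _ hp ↦ half_sub_one_div_nonneg hp)

lemma strictMonoOn_bdgConstTwo : StrictMonoOn bdgConstTwo (Ici 2) :=
  strictMonoOn_mul_rpow
    (strictMonoOn_sqrt_half_mul_rpow.mono (Ici_subset_Ioi.2 one_lt_two))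
    (fun _ hp ↦ mul_nonneg (sqrt_nonneg _)
      (rpow_nonneg (sub_nonneg.2 (one_le_two.trans hp)) _))
    (monotone_two_mul_rpow_add_twoRpowSlope.monotoneOn _)
    (fun _ hp ↦ one_le_two_mul_rpow_add_twoRpowSlope hp)
    (monotoneOn_half_sub_one_div.mono (Ici_subset_Ioi.2 two_pos))
    (fun _ hp ↦ half_sub_one_div_nonneg hp)

lemma tendsto_bdgConstOne_atTop : Tendsto bdgConstOne atTop atTop :=
  tendsto_mul_rpow_atTop tendsto_sqrt_half_atTop
    ((eventually_ge_atTop 2).mono fun _ hp ↦ one_le_twoRpowSlope ((one_le_div two_pos).2 hp))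
    ((eventually_ge_atTop 2).mono fun _ hp ↦ half_sub_one_div_nonneg hp)

lemma tendsto_bdgConstTwo_atTop : Tendsto bdgConstTwo atTop atTop :=
  tendsto_mul_rpow_atTop tendsto_sqrt_half_mul_rpow_atTop
    ((eventually_ge_atTop 2).mono fun _ hp ↦ one_le_two_mul_rpow_add_twoRpowSlope hp)
    ((eventually_ge_atTop 2).mono fun _ hp ↦ half_sub_one_div_nonneg hp)

/-- Properties of the BDG-type constants `ψ₁, ψ₂` (Lemma 8.2): continuity,
strict monotonicity on `[2, ∞)`, value `1` at `2`, and divergence to `∞`. -/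
theorem stmt17
    (ψ1 ψ2 : ℝ → ℝ)
    (hψ1two : ψ1 2 = 1) (hψ2two : ψ2 2 = 1)
    (hψ1 : ∀ p : ℝ, 2 < p →
      ψ1 p = (2 : ℝ) ^ (-(1 / p)) * p ^ ((1 : ℝ) / 2) *
        (((2 : ℝ) ^ (p / 2) - 2) / (p - 2)) ^ ((1 : ℝ) / 2 - 1 / p))
    (hψ2 : ∀ p : ℝ, 2 < p →
      ψ2 p = ((p - 1) / 2) ^ (1 / p) * p ^ ((1 : ℝ) / 2) *
        ((2 : ℝ) ^ (p / 2) + ((2 : ℝ) ^ (p / 2) - 2) / (p - 2)) ^ ((1 : ℝ) / 2 - 1 / p)) :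
    (ContinuousOn ψ1 (Ici 2) ∧ StrictMonoOn ψ1 (Ici 2) ∧ ψ1 2 = 1 ∧
      Tendsto ψ1 atTop atTop) ∧
    (ContinuousOn ψ2 (Ici 2) ∧ StrictMonoOn ψ2 (Ici 2) ∧ ψ2 2 = 1 ∧
      Tendsto ψ2 atTop atTop) := by
  have eq_one : EqOn bdgConstOne ψ1 (Ici 2) :=
    eqOn_Ici_of_eqOn_Ioi (bdgConstOne_two.trans hψ1two.symm)
      fun p hp ↦ (bdgConstOne_of_two_lt hp).trans (hψ1 p hp).symm
  have eq_two : EqOn bdgConstTwo ψ2 (Ici 2) :=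
    eqOn_Ici_of_eqOn_Ioi (bdgConstTwo_two.trans hψ2two.symm)
      fun p hp ↦ (bdgConstTwo_of_two_lt hp).trans (hψ2 p hp).symm
  exact
    ⟨⟨continuousOn_bdgConstOne.congr eq_one.symm, strictMonoOn_bdgConstOne.congr eq_one, hψ1two,
      tendsto_bdgConstOne_atTop.congr' (eq_one.eventuallyEq_of_mem (Ici_mem_atTop 2))⟩,
    ⟨continuousOn_bdgConstTwo.congr eq_two.symm, strictMonoOn_bdgConstTwo.congr eq_two, hψ2two,
      tendsto_bdgConstTwo_atTop.congr' (eq_two.eventuallyEq_of_mem (Ici_mem_atTop 2))⟩⟩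
end
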